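/- Let (X,d_X) and (Y,d_Y) be length spaces, w_d : Y → [0,∞) continuous, and γ = (γ^Y,γ^X) : [0,1] → Y × X a curve with both components absolutely continuous. Then the w_d-length of γ, defined as the limit over refining partitions τ = {0 = t₀ < t₁ < … < t_n = 1} of Σ_{i=1}^n sqrt(d_Y²(γ^Y_{t_{i−1}},γ^Y_{t_i}) + w_d²(γ^Y_{t_{i−1}})·d_X²(γ^X_{t_{i−1}},γ^X_{t_i})), exists and equals ∫₀¹ sqrt(|γ̇^Y_t|² + w_d²(γ^Y_t)|γ̇^X_t|²) dt. -/

import Mathlib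

open MeasureTheory Filter Set Metric Topology ENNReal

noncomputable section

namespace MMS

/-- The space of continuous curves defined on `[0,1]` with values in `Z`. -/
abbrev Curve (Z : Type*) [MetricSpace Z] : Type _ := C(unitInterval, Z)

/-- The projection of `ℝ` onto `[0,1]`. -/
def pr (t : ℝ) : unitInterval := Set.projIcc 0 1 zero_le_one t

variable {Z : Type*} [MetricSpace Z]

/-- The metric speed (metric derivative) of a curve at a point `t ∈ [0,1]`. -/
def speed (γ : Curve Z) (t : unitInterval) : ℝ :=
  limsup (fun s : unitInterval => dist (γ s) (γ t) / dist s t) (𝓝[≠] t)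

/-- The metric speed as a function of a real parameter. -/
def speedR (γ : Curve Z) (t : ℝ) : ℝ := speed γ (pr t)

/-- A curve is absolutely continuous if `dist (γ s) (γ t) ≤ ∫_s^t G` for some
integrable nonnegative `G`. -/
def IsAC (γ : Curve Z) : Prop :=
  ∃ G : ℝ → ℝ, (∀ t, 0 ≤ G t) ∧ IntegrableOn G (Icc (0:ℝ) 1) ∧
    ∀ s t : unitInterval, s ≤ t → dist (γ s) (γ t) ≤ ∫ r in (s : ℝ)..(t : ℝ), G r


/-- The length `∫₀¹ |γ̇_t| dt` of a curve. -/
def lengthE (γ : Curve Z) : ℝ≥0∞ :=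
  ∫⁻ t in Icc (0:ℝ) 1, ENNReal.ofReal (speedR γ t)

/-- A length space: the distance is the infimum of lengths of absolutely continuous
curves joining two given points. -/
def IsLengthSpace (Z : Type*) [MetricSpace Z] : Prop :=
  ∀ x y : Z, ENNReal.ofReal (dist x y)
    = ⨅ (γ : Curve Z) (_ : IsAC γ ∧ γ 0 = x ∧ γ 1 = y), lengthE γ

/-- Sum of `F` over consecutive pairs of a list. -/
def pairSum {α : Type*} (F : α → α → ℝ) : List α → ℝ
  | a :: b :: l => F a b + pairSum F (b :: l)
  | _ => 0

open scoped Classical in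
/-- The sum `Σ F (t_{i-1}) (t_i)` associated to a partition
`τ = {t_0 < t_1 < ... < t_n}` of `[0,1]`, encoded as a finite subset of `[0,1]`. -/
def partitionSum (F : unitInterval → unitInterval → ℝ) (s : Finset unitInterval) : ℝ :=
  pairSum F (s.sort (· ≤ ·))

/-- The filter of refining partitions of `[0,1]` (partitions required to contain the
endpoints, ordered by refinement). -/
def refinements : Filter (Finset unitInterval) :=
  (atTop : Filter (Finset unitInterval)) ⊓ 𝓟 {s | (0 : unitInterval) ∈ s ∧ (1 : unitInterval) ∈ s}

section PairSum

variable {α : Type*}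

lemma pairSum_mono_of_isChain {F F' : α → α → ℝ} {R : α → α → Prop}
    (h : ∀ a b, R a b → F a b ≤ F' a b) :
    ∀ {l : List α}, l.IsChain R → pairSum F l ≤ pairSum F' l
  | [], _ => le_rfl
  | [_], _ => le_rfl
  | a :: b :: l, hl => by
    rw [List.isChain_cons_cons] at hl
    exact add_le_add (h a b hl.1) (pairSum_mono_of_isChain h hl.2)

lemma pairSum_add (F F' : α → α → ℝ) :
    ∀ l : List α, pairSum (fun a b => F a b + F' a b) l = pairSum F l + pairSum F' l
  | [] => by simp [pairSum]
  | [_] => by simp [pairSum]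
  | a :: b :: l => by
    simp only [pairSum, pairSum_add F F' (b :: l)]
    ring

lemma pairSum_const_mul (c : ℝ) (F : α → α → ℝ) :
    ∀ l : List α, pairSum (fun a b => c * F a b) l = c * pairSum F l
  | [] => by simp [pairSum]
  | [_] => by simp [pairSum]
  | a :: b :: l => by
    simp only [pairSum, pairSum_const_mul c F (b :: l)]
    ring

lemma abs_pairSum_sub_le (F F' : α → α → ℝ) :
    ∀ l : List α, |pairSum F l - pairSum F' l| ≤ pairSum (fun a b => |F a b - F' a b|) l
  | [] => by simp [pairSum]
  | [_] => by simp [pairSum]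
  | a :: b :: l => by
    simp only [pairSum]
    refine le_trans ?_ (add_le_add le_rfl (abs_pairSum_sub_le F F' (b :: l)))
    rw [add_sub_add_comm]
    exact abs_add_le _ _

lemma pairSum_sub_eq (f : α → ℝ) :
    ∀ (l : List α) (hl : l ≠ []),
      pairSum (fun a b => f b - f a) l = f (l.getLast hl) - f (l.head hl)
  | [_], _ => by simp [pairSum]
  | a :: b :: l, _ => by
    simp only [pairSum, pairSum_sub_eq f (b :: l) (by simp)]
    simp

end PairSum

section PartitionSum

lemma partitionSum_add (F F' : unitInterval → unitInterval → ℝ) (s : Finset unitInterval) :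
    partitionSum (fun a b => F a b + F' a b) s = partitionSum F s + partitionSum F' s :=
  pairSum_add _ _ _

lemma partitionSum_const_mul (c : ℝ) (F : unitInterval → unitInterval → ℝ)
    (s : Finset unitInterval) :
    partitionSum (fun a b => c * F a b) s = c * partitionSum F s :=
  pairSum_const_mul _ _ _

lemma abs_partitionSum_sub_le (F F' : unitInterval → unitInterval → ℝ)
    (s : Finset unitInterval) :
    |partitionSum F s - partitionSum F' s| ≤ partitionSum (fun a b => |F a b - F' a b|) s :=
  abs_pairSum_sub_le _ _ _

lemma eventually_refinements_superset (s₀ : Finset unitInterval) :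
    ∀ᶠ s in refinements, s₀ ⊆ s ∧ 0 ∈ s ∧ 1 ∈ s := by
  refine Filter.eventually_inf_principal.2 ?_
  filter_upwards [eventually_ge_atTop s₀] with s hs h01
  exact ⟨hs, h01⟩

/-- Partition sums only see short intervals once the partition is fine enough. -/
lemma eventually_partitionSum_le {F F' : unitInterval → unitInterval → ℝ} {δ : ℝ} (hδ : 0 < δ)
    (h : ∀ a b : unitInterval, a < b → (b : ℝ) - a < δ → F a b ≤ F' a b) :
    ∀ᶠ s in refinements, partitionSum F s ≤ partitionSum F' s := by
  obtain ⟨n, hn⟩ := exists_nat_one_div_lt hδ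
  have hn0 : (0 : ℝ) < (n : ℝ) + 1 := by positivity
  filter_upwards [eventually_refinements_superset
    ((Finset.range (n + 2)).image fun k : ℕ => pr ((k : ℝ) / ((n : ℝ) + 1)))] with s hs
  refine pairSum_mono_of_isChain (R := fun a b : unitInterval => a < b ∧ (b : ℝ) - a < δ)
    (fun a b hab => h a b hab.1 hab.2) ?_
  have hsort : (s.sort (· ≤ ·)).Pairwise (· < ·) := (Finset.sortedLT_sort s).pairwise
  rw [List.isChain_iff_getElem]
  intro i hi
  have hlt := List.pairwise_iff_getElem.1 hsort i (i + 1) (by omega) hi (by omega)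
  refine ⟨hlt, ?_⟩
  by_contra! hge
  set a := (s.sort (· ≤ ·))[i] with ha
  set b := (s.sort (· ≤ ·))[i + 1] with hb
  set k := ⌊(a : ℝ) * (n + 1)⌋₊ + 1 with hk
  have ha0 : (0 : ℝ) ≤ a := a.2.1
  have hk1 : (a : ℝ) < k / (n + 1) := by
    rw [lt_div_iff₀ hn0, hk]
    push_cast
    exact Nat.lt_floor_add_one _
  have hk2 : (k : ℝ) / (n + 1) < b := by
    have : (k : ℝ) / (n + 1) ≤ a + 1 / (n + 1) := by
      rw [div_le_iff₀ hn0, add_mul, one_div_mul_cancel hn0.ne', hk]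
      push_cast
      gcongr
      exact Nat.floor_le (by positivity)
    linarith
  have hk3 : (k : ℝ) / (n + 1) ∈ Icc (0 : ℝ) 1 := ⟨by positivity, hk2.le.trans b.2.2⟩
  have hk4 : k < n + 2 := by
    have := (div_le_iff₀ hn0).1 hk3.2
    rw [one_mul] at this
    have : k ≤ n + 1 := by exact_mod_cast this
    omega
  have hmem : pr ((k : ℝ) / (n + 1)) ∈ s.sort (· ≤ ·) := by
    rw [Finset.mem_sort]
    exact hs.1 (Finset.mem_image_of_mem _ (Finset.mem_range.2 hk4))
  obtain ⟨j, hj, hjeq⟩ := List.getElem_of_mem hmem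
  have hval : ((pr ((k : ℝ) / (n + 1)) : unitInterval) : ℝ) = k / (n + 1) := by
    rw [pr, Set.projIcc_of_mem _ hk3]
  have haj : a < (s.sort (· ≤ ·))[j] := by
    rw [hjeq, ← Subtype.coe_lt_coe, hval]; exact hk1
  have hjb : (s.sort (· ≤ ·))[j] < b := by
    rw [hjeq, ← Subtype.coe_lt_coe, hval]; exact hk2
  have hmono : StrictMono (s.sort (· ≤ ·)).get := (Finset.sortedLT_sort s).strictMono_get
  have h1 : i < j := by
    have := hmono.lt_iff_lt (a := ⟨i, by omega⟩) (b := ⟨j, hj⟩)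
    simpa using this.1 haj
  have h2 : j < i + 1 := by
    have := hmono.lt_iff_lt (a := ⟨j, hj⟩) (b := ⟨i + 1, hi⟩)
    simpa using this.1 hjb
  omega

lemma intervalIntegrable_of_unit {f : ℝ → ℝ} (hf : IntervalIntegrable f volume 0 1)
    (a b : unitInterval) : IntervalIntegrable f volume a b := by
  refine hf.mono_set (Set.uIcc_subset_uIcc ?_ ?_) <;>
  · rw [Set.uIcc_of_le zero_le_one]
    exact Subtype.coe_prop _

lemma eventually_partitionSum_integral {f : ℝ → ℝ} (hf : IntervalIntegrable f volume 0 1) :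
    ∀ᶠ s in refinements,
      partitionSum (fun a b => ∫ r in (a : ℝ)..b, f r) s = ∫ r in (0 : ℝ)..1, f r := by
  filter_upwards [eventually_refinements_superset ∅] with s hs
  have hF : (fun a b : unitInterval => ∫ r in (a : ℝ)..b, f r) =
      fun a b : unitInterval => (∫ r in (0 : ℝ)..b, f r) - ∫ r in (0 : ℝ)..a, f r := by
    ext a b
    rw [intervalIntegral.integral_interval_sub_left]
    · exact intervalIntegrable_of_unit hf 0 b
    · exact intervalIntegrable_of_unit hf 0 a
  have hsort : (s.sort (· ≤ ·)).Pairwise (· ≤ ·) := Finset.pairwise_sort s _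
  have h0 : (0 : unitInterval) ∈ s.sort (· ≤ ·) := by simpa using hs.2.1
  have h1 : (1 : unitInterval) ∈ s.sort (· ≤ ·) := by simpa using hs.2.2
  have hne : s.sort (· ≤ ·) ≠ [] := List.ne_nil_of_mem h0
  have hhead : (s.sort (· ≤ ·)).head hne = 0 :=
    le_antisymm (hsort.rel_head h0) unitInterval.nonneg'
  have hlast : (s.sort (· ≤ ·)).getLast hne = 1 :=
    le_antisymm unitInterval.le_one' (hsort.rel_getLast h1)
  rw [hF, partitionSum]
  refine (pairSum_sub_eq (fun a : unitInterval => ∫ r in (0 : ℝ)..a, f r) _ hne).trans ?_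
  rw [hhead, hlast]
  simp

end PartitionSum

section Average

lemma integral_abs_sub_average_le {g φ : ℝ → ℝ} {a b η : ℝ} (hab : a < b)
    (hg : IntervalIntegrable g volume a b) (hφ : Continuous φ)
    (hη : ∀ r ∈ Icc a b, ∀ r' ∈ Icc a b, |φ r - φ r'| ≤ η) :
    ∫ r in a..b, |g r - (∫ u in a..b, g u) / (b - a)| ≤
      2 * (∫ r in a..b, |g r - φ r|) + ∫ _ in a..b, η := by
  have hba : 0 < b - a := sub_pos.2 hab
  have hφi : ∀ a b, IntervalIntegrable φ volume a b := fun a b => hφ.intervalIntegrable a b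
  set c := (∫ u in a..b, g u) / (b - a) with hc
  set J := ∫ r in a..b, |g r - φ r| with hJ
  have hgφ : IntervalIntegrable (fun r => |g r - φ r|) volume a b := (hg.sub (hφi a b)).abs
  have hpt : ∀ r ∈ Icc a b, |g r - c| ≤ |g r - φ r| + (η + J / (b - a)) := by
    intro r hr
    have h1 : (b - a) * (φ r - c) = ∫ u in a..b, (φ r - g u) := by
      rw [intervalIntegral.integral_sub intervalIntegrable_const hg,
        intervalIntegral.integral_const, smul_eq_mul, hc]
      field_simp
    have h2 : |∫ u in a..b, (φ r - g u)| ≤ ∫ u in a..b, (η + |g u - φ u|) := by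
      refine (intervalIntegral.abs_integral_le_integral_abs hab.le).trans ?_
      refine intervalIntegral.integral_mono_on hab.le
        (intervalIntegrable_const.sub hg).abs (intervalIntegrable_const.add hgφ) ?_
      intro u hu
      have h3 : φ r - g u = (φ r - φ u) + -(g u - φ u) := by ring
      rw [h3]
      refine (abs_add_le _ _).trans ?_
      rw [abs_neg]
      exact add_le_add (hη r hr u hu) le_rfl
    rw [intervalIntegral.integral_add intervalIntegrable_const hgφ,
      intervalIntegral.integral_const, smul_eq_mul, ← h1, abs_mul, abs_of_pos hba, ← hJ] at h2
    have h3 : |φ r - c| ≤ η + J / (b - a) := by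
      refine le_of_mul_le_mul_left (h2.trans (le_of_eq ?_)) hba
      field_simp
    calc |g r - c| = |(g r - φ r) + (φ r - c)| := by ring_nf
      _ ≤ |g r - φ r| + |φ r - c| := abs_add_le _ _
      _ ≤ _ := by gcongr
  calc ∫ r in a..b, |g r - c| ≤ ∫ r in a..b, (|g r - φ r| + (η + J / (b - a))) :=
        intervalIntegral.integral_mono_on hab.le (hg.sub intervalIntegrable_const).abs
          (hgφ.add intervalIntegrable_const) hpt
    _ = 2 * J + ∫ _ in a..b, η := by
        rw [intervalIntegral.integral_add hgφ intervalIntegrable_const,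
          intervalIntegral.integral_const, intervalIntegral.integral_const, smul_eq_mul,
          smul_eq_mul, ← hJ]
        field_simp
        ring

/-- Averages of an integrable function over the cells of a partition converge in `L¹`. -/
lemma eventually_partitionSum_average_le {g : ℝ → ℝ} (hg : IntervalIntegrable g volume 0 1)
    {ε : ℝ} (hε : 0 < ε) :
    ∀ᶠ s in refinements,
      partitionSum (fun a b =>
        ∫ r in (a : ℝ)..b, |g r - (∫ u in (a : ℝ)..b, g u) / ((b : ℝ) - a)|) s ≤ ε := by
  have hg' : IntegrableOn g (Ioc 0 1) :=
    (intervalIntegrable_iff_integrableOn_Ioc_of_le zero_le_one).1 hg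
  obtain ⟨φ, -, hφ, hφc, -⟩ :=
    Integrable.exists_hasCompactSupport_integral_sub_le hg' (ε := ε / 4) (by positivity)
  have hunif := isCompact_Icc.uniformContinuousOn_of_continuous
    (hφc.continuousOn (s := Icc (0 : ℝ) 1))
  obtain ⟨δ, hδ, hφδ⟩ := Metric.uniformContinuousOn_iff.1 hunif (ε / 2) (by positivity)
  have hgφ : IntervalIntegrable (fun r => |g r - φ r|) volume 0 1 :=
    (hg.sub (hφc.intervalIntegrable 0 1)).abs
  have hconst : IntervalIntegrable (fun _ : ℝ => ε / 2) volume 0 1 := intervalIntegrable_const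
  have hcell : ∀ᶠ s in refinements, partitionSum (fun a b : unitInterval =>
      ∫ r in (a : ℝ)..b, |g r - (∫ u in (a : ℝ)..b, g u) / ((b : ℝ) - a)|) s ≤
      partitionSum (fun a b : unitInterval =>
        2 * (∫ r in (a : ℝ)..b, |g r - φ r|) + ∫ _ in (a : ℝ)..b, ε / 2) s := by
    refine eventually_partitionSum_le hδ fun a b hab hδab => ?_
    refine integral_abs_sub_average_le hab (intervalIntegrable_of_unit hg a b) hφc ?_
    intro r hr r' hr'
    have ha := a.2.1
    have hb := b.2.2
    refine (hφδ r ⟨ha.trans hr.1, hr.2.trans hb⟩ r' ⟨ha.trans hr'.1, hr'.2.trans hb⟩ ?_).le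
    rw [Real.dist_eq, abs_lt]
    constructor <;> linarith [hr.1, hr.2, hr'.1, hr'.2]
  filter_upwards [hcell, eventually_partitionSum_integral hgφ,
    eventually_partitionSum_integral hconst] with s h1 h2 h3
  refine h1.trans ?_
  rw [partitionSum_add, partitionSum_const_mul, h2, h3,
    intervalIntegral.integral_of_le zero_le_one, intervalIntegral.integral_const]
  simp only [Real.norm_eq_abs] at hφ
  simp only [smul_eq_mul]
  linarith

end Average

section Speed

lemma absolutelyContinuousOnInterval_of_le_integral {h G : ℝ → ℝ}
    (hG : IntervalIntegrable G volume 0 1)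
    (hle : ∀ a ∈ Icc (0 : ℝ) 1, ∀ b ∈ Icc (0 : ℝ) 1, a ≤ b → |h b - h a| ≤ ∫ r in a..b, G r) :
    AbsolutelyContinuousOnInterval h 0 1 := by
  have hsub : ∀ a ∈ Icc (0 : ℝ) 1, IntervalIntegrable G volume 0 a := fun a ha =>
    intervalIntegrable_of_unit hG 0 ⟨a, ha⟩
  have hdist : ∀ a ∈ Icc (0 : ℝ) 1, ∀ b ∈ Icc (0 : ℝ) 1,
      dist (h a) (h b) ≤ dist (∫ r in (0 : ℝ)..a, G r) (∫ r in (0 : ℝ)..b, G r) := by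
    intro a ha b hb
    rcases le_total a b with hab | hab
    · rw [dist_comm, Real.dist_eq, dist_comm, Real.dist_eq,
        intervalIntegral.integral_interval_sub_left (hsub b hb) (hsub a ha)]
      exact (hle a ha b hb hab).trans (le_abs_self _)
    · rw [Real.dist_eq, Real.dist_eq,
        intervalIntegral.integral_interval_sub_left (hsub a ha) (hsub b hb)]
      exact (hle b hb a ha hab).trans (le_abs_self _)
  have hAC := hG.absolutelyContinuousOnInterval_intervalIntegral (c := 0) (by simp)
  rw [absolutelyContinuousOnInterval_iff] at hAC ⊢
  intro ε hε
  obtain ⟨δ, hδ, H⟩ := hAC ε hε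
  refine ⟨δ, hδ, fun E hE hEδ => lt_of_le_of_lt ?_ (H E hE hEδ)⟩
  refine Finset.sum_le_sum fun i hi => ?_
  have := hE.1 i hi
  rw [uIcc_of_le zero_le_one] at this
  exact hdist _ this.1 _ this.2

lemma tendsto_abs_sub_div_dist {f : ℝ → ℝ} {f' t : ℝ} (ht : t ∈ Icc (0 : ℝ) 1)
    (hf : HasDerivAt f f' t) :
    Tendsto (fun s : unitInterval => |f s - f t| / dist s (pr t)) (𝓝[≠] (pr t)) (𝓝 |f'|) := by
  have hpt : ((pr t : unitInterval) : ℝ) = t := by rw [pr, Set.projIcc_of_mem _ ht]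
  have h1 := (hasDerivAt_iff_tendsto_slope.1 hf).abs
  have h2 : Tendsto (fun s : unitInterval => (s : ℝ)) (𝓝[≠] (pr t)) (𝓝[≠] t) := by
    refine tendsto_nhdsWithin_iff.2 ⟨?_, ?_⟩
    · have : Tendsto (fun s : unitInterval => (s : ℝ)) (𝓝 (pr t)) (𝓝 ((pr t : unitInterval) : ℝ)) :=
        continuous_subtype_val.tendsto _
      rw [hpt] at this
      exact this.mono_left nhdsWithin_le_nhds
    · filter_upwards [self_mem_nhdsWithin] with s hs hst
      exact hs (Subtype.ext (hst.trans hpt.symm))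
  refine (h1.comp h2).congr fun s => ?_
  simp only [Function.comp_apply, slope_def_field, abs_div, Subtype.dist_eq, Real.dist_eq, hpt]

variable {γ : Curve Z}

/-- Two-sided control of the metric speed at a point: it is at most the derivative of any function
dominating the increments of the curve, and at least the derivative of any function whose
increments are dominated by those of the curve. -/
lemma abs_deriv_le_speedR_le {Φ : ℝ → ℝ} {Φ' t : ℝ} (ht : t ∈ Icc (0 : ℝ) 1)
    (hΦ : HasDerivAt Φ Φ' t)
    (hle : ∀ s : unitInterval, dist (γ s) (γ (pr t)) ≤ |Φ s - Φ t|) :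
    speedR γ t ≤ |Φ'| ∧ ∀ (h : ℝ → ℝ) (h' : ℝ), HasDerivAt h h' t →
      (∀ s : unitInterval, |h s - h t| ≤ dist (γ s) (γ (pr t))) → |h'| ≤ speedR γ t := by
  have hΦt := tendsto_abs_sub_div_dist ht hΦ
  have hquot : ∀ s : unitInterval,
      dist (γ s) (γ (pr t)) / dist s (pr t) ≤ |Φ s - Φ t| / dist s (pr t) :=
    fun s => div_le_div_of_nonneg_right (hle s) dist_nonneg
  have hbdd : IsBoundedUnder (· ≤ ·) (𝓝[≠] (pr t))
      (fun s : unitInterval => dist (γ s) (γ (pr t)) / dist s (pr t)) :=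
    hΦt.isBoundedUnder_le.mono_le (Eventually.of_forall hquot)
  constructor
  · rw [← hΦt.limsup_eq]
    exact limsup_le_limsup (Eventually.of_forall hquot)
      (isCoboundedUnder_le_of_le _ (x := 0) fun s => by positivity) hΦt.isBoundedUnder_le
  · intro h h' hh hhle
    have hht := tendsto_abs_sub_div_dist ht hh
    rw [← hht.limsup_eq]
    exact limsup_le_limsup
      (Eventually.of_forall fun s => div_le_div_of_nonneg_right (hhle s) dist_nonneg)
      (isCoboundedUnder_le_of_le _ (x := 0) fun s => by positivity) hbdd

lemma measurable_partialSups {g : ℕ → ℝ → ℝ} (hg : ∀ n, Measurable (g n)) (N : ℕ) :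
    Measurable fun t => partialSups (fun n => g n t) N := by
  induction N with
  | zero => simpa using hg 0
  | succ N ih =>
    simp only [partialSups_add_one]
    exact ih.sup (hg (N + 1))

/-- The metric speed of an absolutely continuous curve is integrable, controls the increments of
the curve, and is an `L¹`-limit of suprema of finitely many densities of real functions whose
increments are controlled by those of the curve. -/
lemma IsAC.speedR_spec (hγ : IsAC γ) :
    IntervalIntegrable (speedR γ) volume 0 1 ∧
    (∀ a b : unitInterval, a ≤ b → dist (γ a) (γ b) ≤ ∫ r in (a : ℝ)..b, speedR γ r) ∧
    ∃ g : ℕ → ℝ → ℝ, (∀ n, IntervalIntegrable (g n) volume 0 1) ∧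
      (∀ n (a b : unitInterval), a ≤ b → |∫ r in (a : ℝ)..b, g n r| ≤ dist (γ a) (γ b)) ∧
      (∀ N, IntervalIntegrable (fun r => partialSups (fun n => |g n r|) N) volume 0 1) ∧
      Tendsto (fun N => ∫ r in (0 : ℝ)..1, |speedR γ r - partialSups (fun n => |g n r|) N|)
        atTop (𝓝 0) := by
  obtain ⟨G, hG0, hGi, hGle⟩ := hγ
  have hG : IntervalIntegrable G volume 0 1 :=
    (intervalIntegrable_iff_integrableOn_Icc_of_le zero_le_one).2 hGi
  have hpr : ∀ s : unitInterval, pr (s : ℝ) = s := fun s => Set.projIcc_val _ s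
  have hu : uIcc (0 : ℝ) 1 = Icc 0 1 := uIcc_of_le zero_le_one
  set q := TopologicalSpace.denseSeq unitInterval with hq
  set h : ℕ → ℝ → ℝ := fun n t => dist (γ (pr t)) (γ (q n)) with hh
  set g : ℕ → ℝ → ℝ := fun n => deriv (h n) with hg
  have hhle : ∀ n s t, |h n s - h n t| ≤ dist (γ (pr s)) (γ (pr t)) :=
    fun n s t => abs_dist_sub_le _ _ _
  have hAC : ∀ n, AbsolutelyContinuousOnInterval (h n) 0 1 := by
    refine fun n => absolutelyContinuousOnInterval_of_le_integral hG fun a ha b hb hab => ?_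
    refine (hhle n b a).trans ?_
    have := hGle ⟨a, ha⟩ ⟨b, hb⟩ hab
    rw [dist_comm, pr, pr, Set.projIcc_of_mem _ ha, Set.projIcc_of_mem _ hb]
    exact this
  have hgi : ∀ n, IntervalIntegrable (g n) volume 0 1 := fun n => (hAC n).intervalIntegrable_deriv
  have hgint : ∀ n (a b : unitInterval), ∫ r in (a : ℝ)..b, g n r = h n b - h n a := by
    refine fun n a b => ((hAC n).mono (uIcc_subset_uIcc ?_ ?_)).integral_deriv_eq_sub <;>
    · rw [hu]
      exact Subtype.coe_prop _
  have hdiff : ∀ᵐ t, t ∈ Icc (0 : ℝ) 1 → ∀ n, DifferentiableAt ℝ (h n) t := by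
    rw [← hu]
    have := ae_all_iff.2 fun n => (hAC n).ae_differentiableAt
    filter_upwards [this] with t ht htI n using ht n htI
  -- increments of the curve are controlled by the primitive of any integrable control
  have hprim : ∀ K : ℝ → ℝ, IntervalIntegrable K volume 0 1 →
      (∀ a b : unitInterval, a ≤ b → dist (γ a) (γ b) ≤ ∫ r in (a : ℝ)..b, K r) →
      ∀ t ∈ Icc (0 : ℝ) 1, ∀ s : unitInterval, dist (γ s) (γ (pr t)) ≤
        |(∫ r in (0 : ℝ)..s, K r) - ∫ r in (0 : ℝ)..t, K r| := by
    intro K hK hKle t ht s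
    rw [pr, Set.projIcc_of_mem _ ht]
    lift t to unitInterval using ht
    have hK0 : ∀ a : unitInterval, IntervalIntegrable K volume 0 a :=
      fun a => intervalIntegrable_of_unit hK 0 a
    rcases le_total s t with hst | hst
    · rw [abs_sub_comm, intervalIntegral.integral_interval_sub_left (hK0 t) (hK0 s)]
      exact (hKle s t hst).trans (le_abs_self _)
    · rw [dist_comm, intervalIntegral.integral_interval_sub_left (hK0 s) (hK0 t)]
      exact (hKle t s hst).trans (le_abs_self _)
  have hspeed : ∀ K : ℝ → ℝ, (∀ t, 0 ≤ K t) → IntervalIntegrable K volume 0 1 →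
      (∀ a b : unitInterval, a ≤ b → dist (γ a) (γ b) ≤ ∫ r in (a : ℝ)..b, K r) →
      ∀ᵐ t, t ∈ Icc (0 : ℝ) 1 → speedR γ t ≤ K t ∧ ∀ n, |g n t| ≤ speedR γ t := by
    intro K hK0 hK hKle
    filter_upwards [hdiff, hK.ae_hasDerivAt_integral] with t ht1 ht2 ht
    obtain ⟨h1, h2⟩ := abs_deriv_le_speedR_le ht (ht2 (hu ▸ ht) 0 (by simp)) (hprim K hK hKle t ht)
    rw [abs_of_nonneg (hK0 t)] at h1
    refine ⟨h1, fun n => h2 (h n) _ (ht1 ht n).hasDerivAt fun s => ?_⟩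
    simpa only [hpr] using hhle n s t
  set m : ℝ → ℝ := fun t => ⨆ n, |g n t| with hm
  have hgmeas : ∀ n, Measurable fun t => |g n t| := fun n => (measurable_deriv (h n)).abs
  have hm0 : ∀ t, 0 ≤ m t := fun t => Real.iSup_nonneg fun n => abs_nonneg _
  have hGae := hspeed G hG0 hG hGle
  have hmbdd : ∀ᵐ t, t ∈ Icc (0 : ℝ) 1 → BddAbove (range fun n => |g n t|) ∧ m t ≤ G t := by
    filter_upwards [hGae] with t ht htI
    obtain ⟨h1, h2⟩ := ht htI
    exact ⟨⟨speedR γ t, by rintro _ ⟨n, rfl⟩; exact h2 n⟩, ciSup_le fun n => (h2 n).trans h1⟩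
  have hmi : IntervalIntegrable m volume 0 1 := by
    refine hG.mono_fun (Measurable.iSup hgmeas).aestronglyMeasurable ?_
    rw [uIoc_of_le zero_le_one]
    refine (ae_restrict_iff' measurableSet_Ioc).2 ?_
    filter_upwards [hmbdd] with t ht htI
    rw [Real.norm_of_nonneg (hm0 t), Real.norm_of_nonneg (hG0 t)]
    exact (ht (Ioc_subset_Icc_self htI)).2
  have hmle : ∀ a b : unitInterval, a ≤ b → dist (γ a) (γ b) ≤ ∫ r in (a : ℝ)..b, m r := by
    intro a b hab
    have hsubI : Ioc (a : ℝ) b ⊆ Icc 0 1 := fun r hr => ⟨a.2.1.trans hr.1.le, hr.2.trans b.2.2⟩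
    have hdense : ∀ n, |dist (γ b) (γ (q n)) - dist (γ a) (γ (q n))| ≤
        ∫ r in (a : ℝ)..b, m r := by
      intro n
      have h1 := hgint n a b
      simp only [hh, hpr] at h1
      rw [← h1]
      refine (intervalIntegral.abs_integral_le_integral_abs hab).trans ?_
      rw [intervalIntegral.integral_of_le hab, intervalIntegral.integral_of_le hab]
      refine setIntegral_mono_on_ae (intervalIntegrable_of_unit (hgi n) a b).abs.1
        (intervalIntegrable_of_unit hmi a b).1 measurableSet_Ioc ?_
      filter_upwards [hmbdd] with t ht htI
      exact le_ciSup (ht (hsubI htI)).1 n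
    have hclosed : ∀ c : unitInterval, |dist (γ b) (γ c) - dist (γ a) (γ c)| ≤
        ∫ r in (a : ℝ)..b, m r := by
      refine fun c => (TopologicalSpace.denseRange_denseSeq unitInterval).induction_on c ?_ hdense
      exact isClosed_le (by fun_prop) continuous_const
    have := hclosed b
    rwa [dist_self, zero_sub, abs_neg, abs_of_nonneg dist_nonneg] at this
  have hae : ∀ᵐ t, t ∈ Icc (0 : ℝ) 1 → m t = speedR γ t := by
    filter_upwards [hspeed m hm0 hmi hmle] with t ht htI
    exact le_antisymm (ciSup_le (ht htI).2) (ht htI).1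
  have hbound : ∀ᵐ t, t ∈ Icc (0 : ℝ) 1 → ∀ N,
      0 ≤ partialSups (fun n => |g n t|) N ∧ partialSups (fun n => |g n t|) N ≤ m t := by
    filter_upwards [hmbdd] with t ht htI N
    exact ⟨(abs_nonneg _).trans (le_partialSups_of_le (fun n => |g n t|) (Nat.zero_le N)),
      partialSups_le _ _ _ fun j _ => le_ciSup (ht htI).1 j⟩
  have hPi : ∀ N, IntervalIntegrable (fun r => partialSups (fun n => |g n r|) N) volume 0 1 := by
    intro N
    refine hmi.mono_fun (measurable_partialSups hgmeas N).aestronglyMeasurable ?_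
    rw [uIoc_of_le zero_le_one]
    refine (ae_restrict_iff' measurableSet_Ioc).2 ?_
    filter_upwards [hbound] with t ht htI
    obtain ⟨h1, h2⟩ := ht (Ioc_subset_Icc_self htI) N
    rw [Real.norm_of_nonneg (hm0 t), Real.norm_of_nonneg h1]
    exact h2
  refine ⟨?_, ?_, g, hgi, ?_, hPi, ?_⟩
  · refine hmi.congr_ae ?_
    rw [uIoc_of_le zero_le_one]
    refine (ae_restrict_iff' measurableSet_Ioc).2 ?_
    filter_upwards [hae] with t ht htI using ht (Ioc_subset_Icc_self htI)
  · intro a b hab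
    refine (hmle a b hab).trans_eq (intervalIntegral.integral_congr_ae ?_)
    filter_upwards [hae] with t ht htI
    rw [uIoc_of_le (Subtype.coe_le_coe.2 hab)] at htI
    exact ht ⟨a.2.1.trans htI.1.le, htI.2.trans b.2.2⟩
  · intro n a b hab
    rw [hgint, dist_comm]
    simpa only [hpr] using hhle n b a
  · have hlim : Tendsto (fun N => ∫ r in (0 : ℝ)..1, |m r - partialSups (fun n => |g n r|) N|)
        atTop (𝓝 (∫ _ in (0 : ℝ)..1, (0 : ℝ))) := by
      refine intervalIntegral.tendsto_integral_filter_of_dominated_convergence m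
        (Eventually.of_forall fun N => ((Measurable.iSup hgmeas).sub
          (measurable_partialSups hgmeas N)).abs.aestronglyMeasurable)
        (Eventually.of_forall fun N => ?_) hmi ?_
      · filter_upwards [hbound] with t ht htI
        rw [uIoc_of_le zero_le_one] at htI
        obtain ⟨h1, h2⟩ := ht (Ioc_subset_Icc_self htI) N
        rw [Real.norm_eq_abs, abs_abs, abs_of_nonneg (sub_nonneg.2 h2)]
        linarith
      · filter_upwards [hmbdd] with t ht htI
        rw [uIoc_of_le zero_le_one] at htI
        obtain ⟨h1, -⟩ := ht (Ioc_subset_Icc_self htI)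
        have h2 := tendsto_atTop_ciSup (partialSups_monotone fun n => |g n t|)
          (bddAbove_range_partialSups.2 h1)
        rw [ciSup_partialSups_eq h1] at h2
        change Tendsto _ _ (𝓝 (m t)) at h2
        simpa using (h2.const_sub (m t)).abs
    rw [intervalIntegral.integral_zero] at hlim
    refine hlim.congr fun N => intervalIntegral.integral_congr_ae ?_
    filter_upwards [hae] with t ht htI
    rw [uIoc_of_le zero_le_one] at htI
    rw [ht (Ioc_subset_Icc_self htI)]

end Speed

section DifferenceQuotient

lemma partitionSum_sum {ι : Type*} (t : Finset ι) (F : ι → unitInterval → unitInterval → ℝ)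
    (s : Finset unitInterval) :
    partitionSum (fun a b => ∑ i ∈ t, F i a b) s = ∑ i ∈ t, partitionSum (F i) s := by
  classical
  induction t using Finset.induction_on with
  | empty => simpa using partitionSum_const_mul 0 (fun _ _ => 0) s
  | insert i t hi ih =>
    simp only [Finset.sum_insert hi]
    rw [partitionSum_add, ih]

/-- The piecewise constant difference quotients of an absolutely continuous curve converge in
`L¹` to its metric speed. -/
lemma IsAC.eventually_partitionSum_speedR_sub_le {γ : Curve Z} (hγ : IsAC γ) {ε : ℝ}
    (hε : 0 < ε) :
    ∀ᶠ s in refinements,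
      partitionSum (fun a b =>
        ∫ r in (a : ℝ)..b, |speedR γ r - dist (γ a) (γ b) / ((b : ℝ) - a)|) s ≤ ε := by
  obtain ⟨hm, hle, g, hg, hgle, hPi, hlim⟩ := hγ.speedR_spec
  obtain ⟨N, hN⟩ := (hlim.eventually_lt_const (show (0 : ℝ) < ε / 3 by positivity)).exists
  set m := speedR γ with hm_def
  set P : ℝ → ℝ := fun r => partialSups (fun n => |g n r|) N with hP
  set A : (ℝ → ℝ) → unitInterval → unitInterval → ℝ := fun f a b =>
    ∫ r in (a : ℝ)..b, |f r - (∫ u in (a : ℝ)..b, f u) / ((b : ℝ) - a)| with hA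
  have hmP : IntervalIntegrable (fun r => |m r - P r|) volume 0 1 := (hm.sub (hPi N)).abs
  have hcell : ∀ᶠ s in refinements,
      partitionSum (fun a b : unitInterval =>
        ∫ r in (a : ℝ)..b, |m r - dist (γ a) (γ b) / ((b : ℝ) - a)|) s ≤
      partitionSum (fun a b : unitInterval => (A m a b + ∫ r in (a : ℝ)..b, |m r - P r|) +
        ∑ n ∈ Finset.range (N + 1), A (g n) a b) s := by
    refine eventually_partitionSum_le zero_lt_one fun a b hab _ => ?_
    have hab' : (a : ℝ) < b := hab
    have hba : (0 : ℝ) < b - a := sub_pos.2 hab'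
    have hi1 : ∀ (f : ℝ → ℝ) (c : ℝ), IntervalIntegrable f volume 0 1 →
        IntervalIntegrable (fun r => |f r - c|) volume (a : ℝ) b := fun f c hf =>
      ((intervalIntegrable_of_unit hf a b).sub intervalIntegrable_const).abs
    have hi2 := intervalIntegrable_of_unit hmP a b
    have hi3 : IntervalIntegrable (fun r => ∑ n ∈ Finset.range (N + 1),
        |g n r - (∫ u in (a : ℝ)..b, g n u) / ((b : ℝ) - a)|) volume (a : ℝ) b := by
      have := IntervalIntegrable.sum (Finset.range (N + 1))
        (f := fun n r => |g n r - (∫ u in (a : ℝ)..b, g n u) / ((b : ℝ) - a)|)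
        fun n _ => hi1 (g n) _ (hg n)
      simpa only [Finset.sum_fn] using this
    simp only [hA]
    rw [← intervalIntegral.integral_finsetSum fun n _ => hi1 (g n) _ (hg n),
      ← intervalIntegral.integral_add (hi1 m _ hm) hi2,
      ← intervalIntegral.integral_add ((hi1 m _ hm).add hi2) hi3]
    refine intervalIntegral.integral_mono_on hab'.le (hi1 m _ hm)
      (((hi1 m _ hm).add hi2).add hi3) fun r _ => ?_
    set D := dist (γ a) (γ b) / ((b : ℝ) - a) with hD
    have h1 : D ≤ (∫ u in (a : ℝ)..b, m u) / ((b : ℝ) - a) :=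
      div_le_div_of_nonneg_right (hle a b hab.le) hba.le
    have hsum0 : ∀ n ∈ Finset.range (N + 1),
        0 ≤ |g n r - (∫ u in (a : ℝ)..b, g n u) / ((b : ℝ) - a)| := fun n _ => abs_nonneg _
    obtain ⟨n, hnN, hn⟩ := exists_partialSups_eq (fun n => |g n r|) N
    have h2 := Finset.single_le_sum hsum0 (Finset.mem_range.2 (Nat.lt_succ_of_le hnN))
    have h3 : |(∫ u in (a : ℝ)..b, g n u) / ((b : ℝ) - a)| ≤ D := by
      rw [abs_div, abs_of_pos hba]
      exact div_le_div_of_nonneg_right (hgle n a b hab.le) hba.le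
    have h4 : P r = |g n r| := hn
    have h5 := abs_sub_abs_le_abs_sub (g n r) ((∫ u in (a : ℝ)..b, g n u) / ((b : ℝ) - a))
    have h6 := abs_nonneg (m r - P r)
    have h7 := le_abs_self (m r - P r)
    have h8 := neg_abs_le (m r - (∫ u in (a : ℝ)..b, m u) / ((b : ℝ) - a))
    have h9 := abs_nonneg (m r - (∫ u in (a : ℝ)..b, m u) / ((b : ℝ) - a))
    have h10 := Finset.sum_nonneg hsum0
    rw [abs_le]
    constructor <;> linarith
  have hA1 : ∀ᶠ s in refinements, partitionSum (A m) s ≤ ε / 3 :=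
    eventually_partitionSum_average_le hm (by positivity)
  have hA2 : ∀ᶠ s in refinements, ∀ n ∈ Finset.range (N + 1),
      partitionSum (A (g n)) s ≤ ε / (3 * (N + 1)) :=
    (Filter.eventually_all_finset _).2 fun n _ =>
      eventually_partitionSum_average_le (hg n) (by positivity)
  filter_upwards [hcell, hA1, hA2, eventually_partitionSum_integral hmP] with s h1 h2 h3 h4
  refine h1.trans ?_
  rw [partitionSum_add, partitionSum_add, partitionSum_sum, h4]
  have h5 := Finset.sum_le_card_nsmul _ _ _ h3
  rw [Finset.card_range, nsmul_eq_mul] at h5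
  have h6 : ((N + 1 : ℕ) : ℝ) * (ε / (3 * (N + 1))) = ε / 3 := by
    push_cast
    field_simp
  linarith

end DifferenceQuotient

lemma abs_sqrt_sq_add_sq_sub_le (a b c d : ℝ) :
    |Real.sqrt (a ^ 2 + b ^ 2) - Real.sqrt (c ^ 2 + d ^ 2)| ≤ |a - c| + |b - d| := by
  rw [← Complex.norm_add_mul_I, ← Complex.norm_add_mul_I]
  refine (abs_norm_sub_norm_le _ _).trans ((Complex.norm_le_abs_re_add_abs_im _).trans ?_)
  simp

/-- **Lemma (warped length of curves).** For a curve `γ = (γ^Y, γ^X)` with absolutely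
continuous components, the warped length, i.e. the limit over refining partitions of
`Σ sqrt (d_Y²(γ^Y_{t_{i-1}}, γ^Y_{t_i}) + w_d²(γ^Y_{t_{i-1}})·d_X²(γ^X_{t_{i-1}}, γ^X_{t_i}))`,
exists and equals `∫₀¹ sqrt (|γ̇^Y_t|² + w_d²(γ^Y_t)·|γ̇^X_t|²) dt`. -/
theorem warped_length_eq_integral
    {X : Type*} [MetricSpace X] {Y : Type*} [MetricSpace Y]
    (hX : IsLengthSpace X) (hY : IsLengthSpace Y)
    (wd : Y → ℝ) (hwd : Continuous wd) (hwdnn : ∀ y, 0 ≤ wd y)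
    (γY : Curve Y) (γX : Curve X) (hY' : IsAC γY) (hX' : IsAC γX) :
    Tendsto
      (partitionSum fun a b =>
        Real.sqrt ((dist (γY a) (γY b)) ^ 2 + (wd (γY a)) ^ 2 * (dist (γX a) (γX b)) ^ 2))
      refinements
      (𝓝 (∫ t in Icc (0:ℝ) 1,
        Real.sqrt ((speedR γY t) ^ 2 + (wd (γY (pr t))) ^ 2 * (speedR γX t) ^ 2))) := by
  have hIcc : (∫ t in Icc (0:ℝ) 1,
        Real.sqrt ((speedR γY t) ^ 2 + (wd (γY (pr t))) ^ 2 * (speedR γX t) ^ 2)) =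
      ∫ t in (0:ℝ)..1,
        Real.sqrt ((speedR γY t) ^ 2 + (wd (γY (pr t))) ^ 2 * (speedR γX t) ^ 2) := by
    rw [integral_Icc_eq_integral_Ioc, intervalIntegral.integral_of_le zero_le_one]
  rw [hIcc]
  have hmY := hY'.speedR_spec.1
  have hmX := hX'.speedR_spec.1
  set mY := speedR γY with hmY_def
  set mX := speedR γX with hmX_def
  set w : unitInterval → ℝ := fun t => wd (γY t) with hw
  have hwc : Continuous w := hwd.comp γY.continuous
  have hw0 : ∀ t, 0 ≤ w t := fun t => hwdnn _
  have hprc : Continuous pr := continuous_projIcc (h := zero_le_one)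
  obtain ⟨C, hC⟩ := (isCompact_range hwc).bddAbove
  replace hC : ∀ t, w t ≤ C := fun t => hC (mem_range_self t)
  have hC0 : 0 ≤ C := (hw0 0).trans (hC 0)
  set S : ℝ → ℝ := fun t => Real.sqrt (mY t ^ 2 + w (pr t) ^ 2 * mX t ^ 2) with hS
  have hSi : IntervalIntegrable S volume 0 1 := by
    refine (hmY.abs.add (hmX.abs.const_mul C)).mono_fun ?_ (Eventually.of_forall fun t => ?_)
    · have h1 := hmY.aestronglyMeasurable_restrict_uIoc
      have h2 := hmX.aestronglyMeasurable_restrict_uIoc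
      have h3 : AEStronglyMeasurable (fun t => w (pr t)) (volume.restrict (uIoc (0 : ℝ) 1)) :=
        (hwc.comp hprc).aestronglyMeasurable
      exact Real.continuous_sqrt.comp_aestronglyMeasurable
        ((h1.pow 2).add ((h3.pow 2).mul (h2.pow 2)))
    · have h1 := abs_sqrt_sq_add_sq_sub_le (mY t) (w (pr t) * mX t) 0 0
      have h2 : |w (pr t) * mX t| ≤ C * |mX t| := by
        rw [abs_mul, abs_of_nonneg (hw0 _)]
        exact mul_le_mul_of_nonneg_right (hC _) (abs_nonneg _)
      simp only [Real.norm_eq_abs]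
      refine le_trans ?_ (le_abs_self _)
      simp only [mul_pow, ne_eq, OfNat.ofNat_ne_zero, not_false_eq_true, zero_pow, add_zero,
        Real.sqrt_zero, sub_zero] at h1
      exact h1.trans (add_le_add le_rfl h2)
  rw [Metric.tendsto_nhds]
  intro ε hε
  set K := ∫ t in (0 : ℝ)..1, |mX t| with hK
  have hK0 : 0 ≤ K := intervalIntegral.integral_nonneg zero_le_one fun _ _ => abs_nonneg _
  obtain ⟨δ, hδ, hwδ⟩ := Metric.uniformContinuous_iff.1
    (CompactSpace.uniformContinuous_of_continuous hwc) (ε / (4 * (K + 1))) (by positivity)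
  set F : unitInterval → unitInterval → ℝ := fun a b =>
    Real.sqrt (dist (γY a) (γY b) ^ 2 + wd (γY a) ^ 2 * dist (γX a) (γX b) ^ 2) with hF
  set EY : unitInterval → unitInterval → ℝ := fun a b =>
    ∫ r in (a : ℝ)..b, |mY r - dist (γY a) (γY b) / ((b : ℝ) - a)| with hEY
  set EX : unitInterval → unitInterval → ℝ := fun a b =>
    ∫ r in (a : ℝ)..b, |mX r - dist (γX a) (γX b) / ((b : ℝ) - a)| with hEX
  have hcell : ∀ᶠ s in refinements,
      partitionSum (fun a b : unitInterval => |F a b - ∫ r in (a : ℝ)..b, S r|) s ≤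
      partitionSum (fun a b : unitInterval =>
        (EY a b + C * EX a b) + ε / (4 * (K + 1)) * ∫ r in (a : ℝ)..b, |mX r|) s := by
    refine eventually_partitionSum_le hδ fun a b hab hδab => ?_
    have hab' : (a : ℝ) < b := hab
    have hba : (0 : ℝ) < b - a := sub_pos.2 hab'
    set DY := dist (γY a) (γY b) / ((b : ℝ) - a) with hDY
    set DX := dist (γX a) (γX b) / ((b : ℝ) - a) with hDX
    have hFint : F a b = ∫ _ in (a : ℝ)..b, Real.sqrt (DY ^ 2 + (w a * DX) ^ 2) := by
      rw [intervalIntegral.integral_const, smul_eq_mul]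
      nth_rewrite 1 [← Real.sqrt_sq hba.le]
      rw [← Real.sqrt_mul (sq_nonneg _)]
      simp only [hF, hw, hDY, hDX]
      congr 1
      field_simp
    have hiY : IntervalIntegrable (fun r => |mY r - DY|) volume (a : ℝ) b :=
      ((intervalIntegrable_of_unit hmY a b).sub intervalIntegrable_const).abs
    have hiX : IntervalIntegrable (fun r => |mX r - DX|) volume (a : ℝ) b :=
      ((intervalIntegrable_of_unit hmX a b).sub intervalIntegrable_const).abs
    have hiK := (intervalIntegrable_of_unit hmX a b).abs
    have hiS := intervalIntegrable_of_unit hSi a b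
    simp only [hEY, hEX]
    rw [hFint, ← intervalIntegral.integral_sub intervalIntegrable_const hiS,
      ← intervalIntegral.integral_const_mul, ← intervalIntegral.integral_const_mul,
      ← intervalIntegral.integral_add hiY (hiX.const_mul C),
      ← intervalIntegral.integral_add (hiY.add (hiX.const_mul C)) (hiK.const_mul _)]
    refine (intervalIntegral.abs_integral_le_integral_abs hab'.le).trans ?_
    refine intervalIntegral.integral_mono_on hab'.le (intervalIntegrable_const.sub hiS).abs
      ((hiY.add (hiX.const_mul C)).add (hiK.const_mul _)) fun r hr => ?_
    have hr01 : r ∈ Icc (0 : ℝ) 1 := ⟨a.2.1.trans hr.1, hr.2.trans b.2.2⟩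
    have hwr : |w a - w (pr r)| ≤ ε / (4 * (K + 1)) := by
      refine (hwδ ?_).le
      rw [pr, Set.projIcc_of_mem _ hr01, Subtype.dist_eq, Real.dist_eq, abs_lt]
      constructor <;> linarith [hr.1, hr.2]
    have h1 := abs_sqrt_sq_add_sq_sub_le DY (w a * DX) (mY r) (w (pr r) * mX r)
    rw [abs_sub_comm DY, mul_pow (w (pr r))] at h1
    have h2 : |w a * DX - w (pr r) * mX r| ≤ C * |mX r - DX| + ε / (4 * (K + 1)) * |mX r| := by
      have h3 : w a * DX - w (pr r) * mX r = w a * (DX - mX r) + (w a - w (pr r)) * mX r := by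
        ring
      rw [h3]
      refine (abs_add_le _ _).trans ?_
      rw [abs_mul, abs_mul, abs_of_nonneg (hw0 a), abs_sub_comm DX]
      exact add_le_add (mul_le_mul_of_nonneg_right (hC a) (abs_nonneg _))
        (mul_le_mul_of_nonneg_right hwr (abs_nonneg _))
    refine h1.trans ?_
    rw [add_assoc]
    exact add_le_add le_rfl h2
  filter_upwards [hcell, hY'.eventually_partitionSum_speedR_sub_le (ε := ε / 4) (by positivity),
    hX'.eventually_partitionSum_speedR_sub_le (ε := ε / (4 * (C + 1))) (by positivity),
    eventually_partitionSum_integral hSi, eventually_partitionSum_integral hmX.abs]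
    with s h1 h2 h3 h4 h5
  rw [Real.dist_eq, ← h4]
  refine (abs_partitionSum_sub_le _ _ s).trans_lt (h1.trans_lt ?_)
  rw [partitionSum_add, partitionSum_add, partitionSum_const_mul, partitionSum_const_mul, h5, ← hK]
  have h6 : C * partitionSum EX s ≤ ε / 4 := by
    refine (mul_le_mul_of_nonneg_left h3 hC0).trans ?_
    rw [mul_div_assoc', div_le_div_iff₀ (by positivity) (by positivity)]
    nlinarith
  have h7 : ε / (4 * (K + 1)) * K ≤ ε / 4 := by
    rw [div_mul_eq_mul_div, div_le_div_iff₀ (by positivity) (by positivity)]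
    nlinarith
  have h8 : partitionSum EY s ≤ ε / 4 := h2
  linarith

end MMS
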